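/- Non-conforming minorant for the solenoidal part: let ṽ ∈ L²(Ω;ℝ^N), set E := ∇û − A^{−1}ṽ, and let E = g + A^{−1}ψ with g ∈ 𝒢, ψ ∈ D₀ be its Helmholtz decomposition. Then for every v ∈ D₀ and every u ∈ L²₋₁(Ω) with weak gradient ∇u ∈ L²(Ω;ℝ^N) such that û − u ∈ H¹°₋₁(Ω), ‖A^{−1}ψ‖²_A ≥ M̃₋(A^{−1}ṽ, A^{−1}v, ∇u) := ∫_Ω (2∇u − A^{−1}(2ṽ + v))·v dx. -/

import Mathlib

open MeasureTheory Filter Topology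
open scoped RealInnerProductSpace

noncomputable section

/-- Euclidean space `ℝ^N`. -/
abbrev Euc (N : ℕ) := EuclideanSpace ℝ (Fin N)

/-- The Poincaré constant `c_N = 2/(N-2)`. -/
def cN (N : ℕ) : ℝ := 2 / ((N : ℝ) - 2)

variable {N : ℕ}

/-- Squared weighted `L²_s(Ω)` norm: `∫_Ω (1+|x|²)^s u(x)² dx`. -/
def sqL2 (Ω : Set (Euc N)) (s : ℝ) (u : Euc N → ℝ) : ℝ :=
  ∫ x in Ω, (1 + ‖x‖ ^ 2) ^ s * u x ^ 2

/-- Weighted `L²_s(Ω)` norm. -/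
def nrmL2 (Ω : Set (Euc N)) (s : ℝ) (u : Euc N → ℝ) : ℝ :=
  Real.sqrt (sqL2 Ω s u)

/-- Membership in the weighted space `L²_s(Ω)` (scalar functions). -/
def MemL2 (Ω : Set (Euc N)) (s : ℝ) (u : Euc N → ℝ) : Prop :=
  AEStronglyMeasurable u (volume.restrict Ω) ∧
    Integrable (fun x => (1 + ‖x‖ ^ 2) ^ s * u x ^ 2) (volume.restrict Ω)

/-- Squared weighted `L²_s(Ω;ℝ^N)` norm for vector fields. -/
def sqL2V (Ω : Set (Euc N)) (s : ℝ) (v : Euc N → Euc N) : ℝ :=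
  ∫ x in Ω, (1 + ‖x‖ ^ 2) ^ s * ‖v x‖ ^ 2

/-- Weighted `L²_s(Ω;ℝ^N)` norm for vector fields. -/
def nrmL2V (Ω : Set (Euc N)) (s : ℝ) (v : Euc N → Euc N) : ℝ :=
  Real.sqrt (sqL2V Ω s v)

/-- Membership in the weighted space `L²_s(Ω;ℝ^N)` (vector fields). -/
def MemL2V (Ω : Set (Euc N)) (s : ℝ) (v : Euc N → Euc N) : Prop :=
  AEStronglyMeasurable v (volume.restrict Ω) ∧
    Integrable (fun x => (1 + ‖x‖ ^ 2) ^ s * ‖v x‖ ^ 2) (volume.restrict Ω)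

/-- Test functions: `φ ∈ C_c^∞(Ω)`. -/
def IsTest (Ω : Set (Euc N)) (φ : Euc N → ℝ) : Prop :=
  ContDiff ℝ (⊤ : ℕ∞) φ ∧ HasCompactSupport φ ∧ tsupport φ ⊆ Ω

/-- `g` is the weak gradient of `u` on `Ω`:
`∫_Ω u ∇φ = −∫_Ω φ g` for all test functions `φ`. -/
def IsWeakGrad (Ω : Set (Euc N)) (u : Euc N → ℝ) (g : Euc N → Euc N) : Prop :=
  ∀ φ : Euc N → ℝ, IsTest Ω φ →
    (∫ x in Ω, u x • gradient φ x) = - ∫ x in Ω, φ x • g x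

/-- `d` is the weak divergence of the vector field `v` on `Ω`:
`∫_Ω v·∇φ = −∫_Ω d φ` for all test functions `φ`. -/
def IsWeakDiv (Ω : Set (Euc N)) (v : Euc N → Euc N) (d : Euc N → ℝ) : Prop :=
  ∀ φ : Euc N → ℝ, IsTest Ω φ →
    (∫ x in Ω, ⟪v x, gradient φ x⟫) = - ∫ x in Ω, d x * φ x

/-- `u ∈ H¹°₋₁(Ω)` with weak gradient `g`: `u ∈ L²₋₁(Ω)`, `g ∈ L²(Ω;ℝ^N)` is the weak
gradient of `u`, and `u` is approximated by test functions in the natural norms. -/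
def MemH10 (Ω : Set (Euc N)) (u : Euc N → ℝ) (g : Euc N → Euc N) : Prop :=
  MemL2 Ω (-1) u ∧ MemL2V Ω 0 g ∧ IsWeakGrad Ω u g ∧
    ∃ φ : ℕ → Euc N → ℝ, (∀ n, IsTest Ω (φ n)) ∧
      Tendsto (fun n => nrmL2 Ω (-1) (fun x => u x - φ n x)) atTop (𝓝 0) ∧
      Tendsto (fun n => nrmL2V Ω 0 (fun x => g x - gradient (φ n) x)) atTop (𝓝 0)

/-- `g ∈ 𝒢`, the closure in `L²(Ω;ℝ^N)` of `{∇φ : φ ∈ C_c^∞(Ω)}`. -/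
def MemG (Ω : Set (Euc N)) (g : Euc N → Euc N) : Prop :=
  MemL2V Ω 0 g ∧
    ∃ φ : ℕ → Euc N → ℝ, (∀ n, IsTest Ω (φ n)) ∧
      Tendsto (fun n => nrmL2V Ω 0 (fun x => g x - gradient (φ n) x)) atTop (𝓝 0)

/-- `ψ ∈ D₀`, the set of weakly divergence-free fields in `L²(Ω;ℝ^N)`. -/
def MemD0 (Ω : Set (Euc N)) (ψ : Euc N → Euc N) : Prop :=
  MemL2V Ω 0 ψ ∧
    ∀ φ : Euc N → ℝ, IsTest Ω φ → (∫ x in Ω, ⟪ψ x, gradient φ x⟫) = 0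

/-- The coefficient matrix field `A : Ω → ℝ^{N×N}`: measurable, essentially bounded,
symmetric, and uniformly coercive (`A(x)ξ·ξ ≥ α⁻²|ξ|²` for a.e. `x ∈ Ω`). -/
structure Coeff (N : ℕ) (Ω : Set (Euc N)) where
  A : Euc N → Euc N →L[ℝ] Euc N
  α : ℝ
  α_pos : 0 < α
  meas : ∀ ξ : Euc N, AEStronglyMeasurable (fun x => A x ξ) (volume.restrict Ω)
  bdd : ∃ C : ℝ, ∀ᵐ x ∂(volume.restrict Ω), ∀ ξ : Euc N, ‖A x ξ‖ ≤ C * ‖ξ‖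
  symm : ∀ x : Euc N, ∀ ξ η : Euc N, ⟪A x ξ, η⟫ = ⟪ξ, A x η⟫
  coer : ∀ᵐ x ∂(volume.restrict Ω), ∀ ξ : Euc N, α⁻¹ ^ 2 * ‖ξ‖ ^ 2 ≤ ⟪A x ξ, ξ⟫

/-- The weighted inner product `⟨v,w⟩_A = ∫_Ω A v · w dx`. -/
def ipA (Ω : Set (Euc N)) (A : Euc N → Euc N →L[ℝ] Euc N) (v w : Euc N → Euc N) : ℝ :=
  ∫ x in Ω, ⟪A x (v x), w x⟫

/-- The squared `A`-weighted norm `‖v‖²_A = ∫_Ω A v · v dx`. -/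
def sqA (Ω : Set (Euc N)) (A : Euc N → Euc N →L[ℝ] Euc N) (v : Euc N → Euc N) : ℝ :=
  ipA Ω A v v

/-- The `A`-weighted norm `‖v‖_A`. -/
def nrmA (Ω : Set (Euc N)) (A : Euc N → Euc N →L[ℝ] Euc N) (v : Euc N → Euc N) : ℝ :=
  Real.sqrt (sqA Ω A v)

/-- `w = A⁻¹ v` (a.e. on `Ω`), with `w ∈ L²(Ω;ℝ^N)`. -/
def IsAInv (Ω : Set (Euc N)) (A : Euc N → Euc N →L[ℝ] Euc N) (v w : Euc N → Euc N) : Prop :=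
  MemL2V Ω 0 w ∧ ∀ᵐ x ∂(volume.restrict Ω), A x (w x) = v x

/-!
Write `e = ∇û - A⁻¹ṽ - g`, so that `A e = ψ`. Nonnegativity of `‖e - A⁻¹v‖²_A` gives
`∫ (2 e - A⁻¹v)·v ≤ ‖e‖²_A`. The field `2 ∇u - A⁻¹(2 ṽ + v)` differs from `2 e - A⁻¹v` by
`2 g - 2 ∇(û - u)`, which lies in `𝒢` and is therefore orthogonal in `L²` to `v ∈ D₀`.
-/

section InnerL2

variable {α ι E : Type*} [MeasurableSpace α] {μ : Measure α} [NormedAddCommGroup E]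

theorem integrable_inner_of_memLp_two (𝕜 : Type*) [RCLike 𝕜] [InnerProductSpace 𝕜 E] {f g : α → E}
    (hf : MemLp f 2 μ) (hg : MemLp g 2 μ) : Integrable (fun x => inner 𝕜 (f x) (g x)) μ := by
  refine (L2.integrable_inner (𝕜 := 𝕜) (hf.toLp f) (hg.toLp g)).congr ?_
  filter_upwards [hf.coeFn_toLp, hg.coeFn_toLp] with x hfx hgx
  rw [hfx, hgx]

theorem inner_toLp_toLp (𝕜 : Type*) [RCLike 𝕜] [InnerProductSpace 𝕜 E] {f g : α → E}
    (hf : MemLp f 2 μ) (hg : MemLp g 2 μ) :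
    inner 𝕜 (hf.toLp f) (hg.toLp g) = ∫ x, inner 𝕜 (f x) (g x) ∂μ := by
  rw [L2.inner_def]
  refine integral_congr_ae ?_
  filter_upwards [hf.coeFn_toLp, hg.coeFn_toLp] with x hfx hgx
  rw [hfx, hgx]

theorem tendsto_integral_inner_of_tendsto_eLpNorm_sub (𝕜 : Type*) [RCLike 𝕜]
    [InnerProductSpace 𝕜 E] {l : Filter ι} {F : ι → α → E} {f h : α → E}
    (hF : ∀ i, MemLp (F i) 2 μ) (hf : MemLp f 2 μ) (hh : MemLp h 2 μ)
    (hlim : Tendsto (fun i => eLpNorm (F i - f) 2 μ) l (𝓝 0)) :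
    Tendsto (fun i => ∫ x, inner 𝕜 (F i x) (h x) ∂μ) l (𝓝 (∫ x, inner 𝕜 (f x) (h x) ∂μ)) := by
  have hLp : Tendsto (fun i => (hF i).toLp (F i)) l (𝓝 (hf.toLp f)) :=
    (Lp.tendsto_Lp_iff_tendsto_eLpNorm'' F hF f hf).2 hlim
  simpa only [inner_toLp_toLp 𝕜 _ hh] using
    hLp.inner (𝕜 := 𝕜) (tendsto_const_nhds (x := hh.toLp h))

end InnerL2

section PositiveOperator

variable {α E : Type*} [NormedAddCommGroup E] [InnerProductSpace ℝ E]

theorem inner_two_smul_sub_apply_le {T : E →ₗ[ℝ] E} (hT : T.IsPositive) (x y : E) :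
    ⟪(2 : ℝ) • x - y, T y⟫ ≤ ⟪T x, x⟫ := by
  have hnonneg : 0 ≤ ⟪T (x - y), x - y⟫ := hT.re_inner_nonneg_left (x - y)
  have hsymm : ⟪T x, y⟫ = ⟪x, T y⟫ := hT.isSymmetric x y
  simp only [map_sub, inner_sub_left, inner_sub_right, real_inner_smul_left,
    real_inner_comm _ (T y)] at hnonneg ⊢
  linarith

theorem integral_inner_two_smul_sub_apply_le [MeasurableSpace α] {μ : Measure α}
    {A : α → E →ₗ[ℝ] E} (hA : ∀ᵐ x ∂μ, (A x).IsPositive) {e w : α → E}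
    (he : MemLp e 2 μ) (hAe : MemLp (fun x => A x (e x)) 2 μ)
    (hw : MemLp w 2 μ) (hAw : MemLp (fun x => A x (w x)) 2 μ) :
    ∫ x, ⟪(2 : ℝ) • e x - w x, A x (w x)⟫ ∂μ ≤ ∫ x, ⟪A x (e x), e x⟫ ∂μ :=
  integral_mono_ae (integrable_inner_of_memLp_two ℝ ((he.const_smul (2 : ℝ)).sub hw) hAw)
    (integrable_inner_of_memLp_two ℝ hAe he)
    (hA.mono fun x hx => inner_two_smul_sub_apply_le hx (e x) (w x))

end PositiveOperator

theorem memLp_gradient_of_hasCompactSupport {𝕜 F : Type*} [RCLike 𝕜] [NormedAddCommGroup F]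
    [InnerProductSpace 𝕜 F] [CompleteSpace F] [MeasurableSpace F] [OpensMeasurableSpace F]
    {μ : Measure F} [IsFiniteMeasureOnCompacts μ] {φ : F → 𝕜} (hφ : ContDiff 𝕜 1 φ)
    (hsupp : HasCompactSupport φ) (p : ENNReal) : MemLp (gradient φ) p μ := by
  have hcont : Continuous (gradient φ) :=
    (InnerProductSpace.toDual 𝕜 F).symm.continuous.comp (hφ.continuous_fderiv one_ne_zero)
  have hgrad : HasCompactSupport (gradient φ) :=
    (hsupp.fderiv (𝕜 := 𝕜)).comp_left (map_zero (InnerProductSpace.toDual 𝕜 F).symm)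
  exact hcont.memLp_of_hasCompactSupport hgrad

section WeightedSpaces

variable {Ω : Set (Euc N)}

theorem memL2V_zero_iff_memLp {v : Euc N → Euc N} :
    MemL2V Ω 0 v ↔ MemLp v 2 (volume.restrict Ω) := by
  simp only [MemL2V, Real.rpow_zero, one_mul]
  exact ⟨fun h => (memLp_two_iff_integrable_sq_norm h.1).2 h.2,
    fun h => ⟨h.1, (memLp_two_iff_integrable_sq_norm h.1).1 h⟩⟩

theorem MemL2V.memLp {v : Euc N → Euc N} (hv : MemL2V Ω 0 v) : MemLp v 2 (volume.restrict Ω) :=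
  memL2V_zero_iff_memLp.1 hv

theorem nrmL2V_zero_eq_toReal_eLpNorm {v : Euc N → Euc N}
    (hv : AEStronglyMeasurable v (volume.restrict Ω)) :
    nrmL2V Ω 0 v = (eLpNorm v 2 (volume.restrict Ω)).toReal := by
  rw [toReal_eLpNorm hv, lpNorm_eq_integral_norm_rpow_toReal two_ne_zero ENNReal.ofNat_ne_top hv]
  simp [nrmL2V, sqL2V, Real.sqrt_eq_rpow]

theorem MemH10.memG {u : Euc N → ℝ} {g : Euc N → Euc N} (h : MemH10 Ω u g) : MemG Ω g := by
  obtain ⟨-, hg, -, φ, hφ, -, hlim⟩ := h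
  exact ⟨hg, φ, hφ, hlim⟩

theorem MemG.exists_tendsto_eLpNorm_sub {g : Euc N → Euc N} (hg : MemG Ω g) :
    ∃ φ : ℕ → Euc N → ℝ, (∀ n, IsTest Ω (φ n)) ∧
      (∀ n, MemLp (gradient (φ n)) 2 (volume.restrict Ω)) ∧
      Tendsto (fun n => eLpNorm (gradient (φ n) - g) 2 (volume.restrict Ω)) atTop (𝓝 0) := by
  obtain ⟨hgL2, φ, hφ, hlim⟩ := hg
  have hgrad : ∀ n, MemLp (gradient (φ n)) 2 (volume.restrict Ω) := fun n =>
    memLp_gradient_of_hasCompactSupport ((hφ n).1.of_le (by simp)) (hφ n).2.1 2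
  have hdiff : ∀ n, MemLp (g - gradient (φ n)) 2 (volume.restrict Ω) := fun n =>
    hgL2.memLp.sub (hgrad n)
  refine ⟨φ, hφ, hgrad, ?_⟩
  simp only [eLpNorm_sub_comm _ g]
  refine (ENNReal.tendsto_toReal_zero_iff fun n => (hdiff n).eLpNorm_ne_top).1 ?_
  exact hlim.congr fun n => nrmL2V_zero_eq_toReal_eLpNorm (hdiff n).1

theorem MemG.integral_inner_eq_zero {g v : Euc N → Euc N} (hg : MemG Ω g) (hv : MemD0 Ω v) :
    ∫ x in Ω, ⟪g x, v x⟫ = 0 := by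
  obtain ⟨φ, hφ, hgrad, hlim⟩ := hg.exists_tendsto_eLpNorm_sub
  have hzero : ∀ n, ∫ x in Ω, ⟪gradient (φ n) x, v x⟫ = 0 := fun n => by
    simpa only [real_inner_comm] using hv.2 (φ n) (hφ n)
  have hconv := tendsto_integral_inner_of_tendsto_eLpNorm_sub ℝ hgrad
    hg.1.memLp hv.1.memLp hlim
  simp only [hzero] at hconv
  exact tendsto_nhds_unique hconv tendsto_const_nhds

theorem MemD0.integral_inner_add_smul {F g v : Euc N → Euc N} (hv : MemD0 Ω v)
    (hF : MemLp F 2 (volume.restrict Ω)) (hg : MemG Ω g) (c : ℝ) :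
    ∫ x in Ω, ⟪F x + c • g x, v x⟫ = ∫ x in Ω, ⟪F x, v x⟫ := by
  have hintF := integrable_inner_of_memLp_two ℝ hF hv.1.memLp
  have hintg := integrable_inner_of_memLp_two ℝ hg.1.memLp hv.1.memLp
  simp only [inner_add_left, real_inner_smul_left]
  rw [integral_add hintF (hintg.const_mul c), integral_const_mul, hg.integral_inner_eq_zero hv,
    mul_zero, add_zero]

theorem Coeff.ae_isPositive (M : Coeff N Ω) : ∀ᵐ x ∂(volume.restrict Ω), (M.A x).IsPositive := by
  filter_upwards [M.coer] with x hx
  refine ⟨M.symm x, fun ξ => ?_⟩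
  exact (by positivity : 0 ≤ M.α⁻¹ ^ 2 * ‖ξ‖ ^ 2).trans (hx ξ)

theorem IsAInv.integral_inner_two_smul_sub_le_sqA {A : Euc N → Euc N →L[ℝ] Euc N}
    (hA : ∀ᵐ x ∂(volume.restrict Ω), (A x).IsPositive) {ψ e v w : Euc N → Euc N}
    (he : IsAInv Ω A ψ e) (hψ : MemL2V Ω 0 ψ) (hw : IsAInv Ω A v w) (hv : MemL2V Ω 0 v) :
    ∫ x in Ω, ⟪(2 : ℝ) • e x - w x, v x⟫ ≤ sqA Ω A e := by
  calc ∫ x in Ω, ⟪(2 : ℝ) • e x - w x, v x⟫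
      = ∫ x in Ω, ⟪(2 : ℝ) • e x - w x, A x (w x)⟫ :=
        integral_congr_ae (hw.2.mono fun x hx => by simp only [hx])
    _ ≤ sqA Ω A e :=
        integral_inner_two_smul_sub_apply_le
          (hA.mono fun x hx => hx.toLinearMap) he.1.memLp
          (hψ.memLp.ae_eq (EventuallyEq.symm he.2)) hw.1.memLp
          (hv.memLp.ae_eq (EventuallyEq.symm hw.2))

/-- `p`, `q` stand for `∇û`, `∇u`, and `wt`, `w` for `A⁻¹ṽ`, `A⁻¹v`. -/
theorem stmt_14_general {A : Euc N → Euc N →L[ℝ] Euc N}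
    (hA : ∀ᵐ x ∂(volume.restrict Ω), (A x).IsPositive) {p q wt g ψ v w : Euc N → Euc N}
    (hg : MemG Ω g) (hpq : MemG Ω (fun x => p x - q x)) (hψ : MemL2V Ω 0 ψ)
    (he : IsAInv Ω A ψ (fun x => (p x - wt x) - g x)) (hv : MemD0 Ω v) (hw : IsAInv Ω A v w) :
    ∫ x in Ω, ⟪(2 : ℝ) • q x - ((2 : ℝ) • wt x + w x), v x⟫ ≤
      sqA Ω A (fun x => (p x - wt x) - g x) := by
  set e : Euc N → Euc N := fun x => (p x - wt x) - g x with he_def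
  have hF : MemLp (fun x => (2 : ℝ) • e x - w x) 2 (volume.restrict Ω) :=
    (he.1.memLp.const_smul (2 : ℝ)).sub hw.1.memLp
  calc ∫ x in Ω, ⟪(2 : ℝ) • q x - ((2 : ℝ) • wt x + w x), v x⟫
      = ∫ x in Ω, ⟪((2 : ℝ) • e x - w x + (2 : ℝ) • g x) + (-2 : ℝ) • (p x - q x), v x⟫ := by
        congr! 3 with x
        simp only [he_def]
        module
    _ = ∫ x in Ω, ⟪(2 : ℝ) • e x - w x + (2 : ℝ) • g x, v x⟫ :=
        hv.integral_inner_add_smul (hF.add (hg.1.memLp.const_smul (2 : ℝ))) hpq (-2)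
    _ = ∫ x in Ω, ⟪(2 : ℝ) • e x - w x, v x⟫ := hv.integral_inner_add_smul hF hg 2
    _ ≤ sqA Ω A e := he.integral_inner_two_smul_sub_le_sqA hA hψ hw hv.1

end WeightedSpaces

/-- Non-conforming minorant for the solenoidal part:
`‖A⁻¹ψ‖²_A ≥ ∫ (2∇u − A⁻¹(2ṽ + v))·v` for `v ∈ D₀` and `û − u ∈ H¹°₋₁(Ω)`. -/
theorem stmt_14 (Ω : Set (Euc N)) (hΩ : IsOpen Ω) (hN : 3 ≤ N) (M : Coeff N Ω)
    (f : Euc N → ℝ) (hf : MemL2 Ω 1 f)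
    (uh : Euc N → ℝ) (gu : Euc N → Euc N)
    (huh : MemL2 Ω (-1) uh) (hgu : MemL2V Ω 0 gu) (hguw : IsWeakGrad Ω uh gu)
    (hweak : ∀ φ : Euc N → ℝ, IsTest Ω φ →
      (∫ x in Ω, ⟪M.A x (gu x), gradient φ x⟫) = ∫ x in Ω, f x * φ x)
    (vt : Euc N → Euc N) (hvt : MemL2V Ω 0 vt)
    (wt : Euc N → Euc N) (hwt : IsAInv Ω M.A vt wt)
    (g ψ : Euc N → Euc N) (hg : MemG Ω g) (hψ : MemD0 Ω ψ)
    (hdec : ∀ᵐ x ∂(volume.restrict Ω), M.A x ((gu x - wt x) - g x) = ψ x) :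
    ∀ v : Euc N → Euc N, MemD0 Ω v → ∀ wv : Euc N → Euc N, IsAInv Ω M.A v wv →
    ∀ (u : Euc N → ℝ) (gu' : Euc N → Euc N),
      MemL2 Ω (-1) u → MemL2V Ω 0 gu' → IsWeakGrad Ω u gu' →
      MemH10 Ω (fun x => uh x - u x) (fun x => gu x - gu' x) →
      (∫ x in Ω, ⟪(2 : ℝ) • gu' x - ((2 : ℝ) • wt x + wv x), v x⟫) ≤
        sqA Ω M.A (fun x => (gu x - wt x) - g x) := by
  intro v hv wv hwv u gu' _ _ _ hdiff
  have he : MemL2V Ω 0 (fun x => (gu x - wt x) - g x) :=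
    memL2V_zero_iff_memLp.2 ((hgu.memLp.sub hwt.1.memLp).sub hg.1.memLp)
  exact stmt_14_general M.ae_isPositive hg hdiff.memG hψ.1 ⟨he, hdec⟩ hv hwv
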